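/- arXiv:1806.02560 — 2 statements merged into one kernel-verified Lean document; each statement's English description precedes it below -/
import Mathlib

section
/- Let b ≥ 2 be an integer with prime factorization b = p₁^{a₁} p₂^{a₂} ⋯ p_r^{a_r} with r ≥ 2 distinct primes. Suppose there exist two distinct indices i ≠ j such that a_i(p_i−1) = a_j(p_j−1) = max_{1 ≤ m ≤ r} a_m(p_m−1). Then for every integer k ≥ 2, the sequence (ℓ_b(n!))_{n∈ℕ} of last nonzero digits of n! in base b is not k-automatic. -/
/-- The state reached after feeding the base-`k` digits of `n`
(most significant digit first, empty string for `n = 0`) into the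
transition function `ρ` starting from state `q₀`. -/
def autoRun {Q : Type} (k : ℕ) (ρ : Q → Fin k → Q) (q₀ : Q) (n : ℕ) : Q :=
  (Nat.digits k n).reverse.foldl (fun q d => if h : d < k then ρ q ⟨d, h⟩ else q) q₀

/-- A sequence `a : ℕ → Δ` is `k`-automatic: some DFAO over the alphabet
`{0, …, k-1}` computes `a n` from the base-`k` digits of `n`
(most significant digit first). -/
def IsAutomatic {Δ : Type*} (k : ℕ) (a : ℕ → Δ) : Prop :=
  ∃ (Q : Type) (_ : Finite Q) (ρ : Q → Fin k → Q) (q₀ : Q) (τ : Q → Δ),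
    ∀ n : ℕ, a n = τ (autoRun k ρ q₀ n)

/-- `lnz b n` is the last nonzero digit of `n` in base `b`:
`(n / b ^ v_b(n)) % b`, where `v_b(n) = padicValNat b n` is the largest `t`
with `b ^ t ∣ n`. -/
def lnz (b n : ℕ) : ℕ := (n / b ^ padicValNat b n) % b

/-- `digSum b n` is the sum of the digits of `n` written in base `b`. -/
def digSum (b n : ℕ) : ℕ := (Nat.digits b n).sum

namespace LnzAux

lemma digSum_step (b x r : ℕ) (hb : 2 ≤ b) (hr : r < b) :
    digSum b (b * x + r) = digSum b x + r := by
  unfold digSum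
  rcases Nat.eq_zero_or_pos (b * x + r) with h | h
  · have h1 : b * x = 0 := by omega
    have hx : x = 0 := by
      rcases Nat.mul_eq_zero.mp h1 with h2 | h2 <;> omega
    have hr0 : r = 0 := by omega
    subst hx; subst hr0; simp
  · rw [Nat.digits_def' (by omega) h]
    have e1 : (b * x + r) % b = r := by
      rw [Nat.mul_add_mod]; exact Nat.mod_eq_of_lt hr
    have e2 : (b * x + r) / b = x := by
      rw [Nat.mul_add_div (by omega), Nat.div_eq_of_lt hr]; rfl
    rw [e1, e2]; simp [add_comm]

lemma digSum_split (b : ℕ) (hb : 2 ≤ b) (L : ℕ) : ∀ x y : ℕ, y < b ^ L →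
    digSum b (x * b ^ L + y) = digSum b x + digSum b y := by
  induction L with
  | zero => intro x y hy; have : y = 0 := by simpa using hy
            subst this; simp [digSum]
  | succ L ih =>
    intro x y hy
    have hm : y % b < b := Nat.mod_lt _ (by omega)
    have hd : y / b < b ^ L := by
      apply Nat.div_lt_of_lt_mul; rw [← pow_succ']; exact hy
    have e : x * b ^ (L + 1) + y = b * (x * b ^ L + y / b) + y % b := by
      have := Nat.div_add_mod y b
      rw [pow_succ, mul_add, add_assoc, this]; ring
    have e2 : digSum b y = digSum b (y / b) + y % b := by
      conv_lhs => rw [← Nat.div_add_mod y b]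
      exact digSum_step b _ _ hb hm
    rw [e, digSum_step b _ _ hb hm, ih x _ hd, e2]; ring

lemma digSum_pos (b : ℕ) (hb : 2 ≤ b) (x : ℕ) (hx : 0 < x) : 1 ≤ digSum b x := by
  induction x using Nat.strong_induction_on with
  | _ x ih =>
    have hm : x % b < b := Nat.mod_lt _ (by omega)
    have e2 : digSum b x = digSum b (x / b) + x % b := by
      conv_lhs => rw [← Nat.div_add_mod x b]
      exact digSum_step b _ _ hb hm
    rcases Nat.eq_zero_or_pos (x / b) with h | h
    · have := Nat.div_add_mod x b
      rw [h] at this; omega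
    · have := ih (x / b) (Nat.div_lt_self hx (by omega)) h
      omega

lemma digSum_le (b x : ℕ) : digSum b x ≤ x := Nat.digit_sum_le b x

/-- Numbers `d * p ^ L + z` have arbitrarily large base `q` digit sums. -/
lemma exists_large_digSum (p q : ℕ) (hp : 2 ≤ p) (hq : 2 ≤ q) (hpq : Nat.Coprime p q)
    (D Z C : ℕ) : ∃ L : ℕ, Z < p ^ L ∧ ∀ d z : ℕ, 1 ≤ d → d ≤ D → z ≤ Z →
      C ≤ digSum q (d * p ^ L + z) := by
  induction C with
  | zero => exact ⟨Z, Nat.lt_pow_self (by omega), by intros; omega⟩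
  | succ C ih =>
    obtain ⟨L, hL, H⟩ := ih
    obtain ⟨h, hh⟩ : ∃ h, h = D * p ^ L + Z := ⟨_, rfl⟩
    have hh1 : h < q ^ h := Nat.lt_pow_self (by omega)
    have hφ : 1 ≤ Nat.totient (q ^ h) := Nat.totient_pos.mpr (by positivity)
    set L' := L + Nat.totient (q ^ h) * q ^ h with hL'
    have hcong : p ^ L' ≡ p ^ L [MOD q ^ h] := by
      rw [hL', pow_add, pow_mul]
      have h1 : p ^ Nat.totient (q ^ h) ≡ 1 [MOD q ^ h] :=
        Nat.ModEq.pow_totient (Nat.Coprime.pow_right _ hpq)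
      have h2 := (h1.pow (q ^ h)).mul_left (p ^ L)
      simpa using h2
    have hbig : q ^ h ≤ p ^ L' := by
      have h1 : q ^ h ≤ L' := by rw [hL']; nlinarith
      exact h1.trans (Nat.lt_pow_self (by omega)).le
    refine ⟨L', lt_of_lt_of_le hL (Nat.pow_le_pow_right (by omega) (by omega)), ?_⟩
    intro d z hd hdD hz
    have hc2 : d * p ^ L' + z ≡ d * p ^ L + z [MOD q ^ h] := (hcong.mul_left d).add_right z
    have hsm : d * p ^ L + z < q ^ h := by
      refine lt_of_le_of_lt ?_ hh1
      rw [hh]; gcongr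
    have hmod : (d * p ^ L' + z) % q ^ h = d * p ^ L + z := by
      rw [hc2, Nat.mod_eq_of_lt hsm]
    have hdiv : 0 < (d * p ^ L' + z) / q ^ h := by
      apply Nat.div_pos _ (by positivity)
      nlinarith
    have e := Nat.div_add_mod (d * p ^ L' + z) (q ^ h)
    rw [hmod, mul_comm] at e
    rw [← e, digSum_split q hq h _ _ hsm]
    have := digSum_pos q hq _ hdiv
    have := H d z hd hdD hz
    omega

lemma autoRun_step {Q : Type} (k : ℕ) (hk : 2 ≤ k) (ρ : Q → Fin k → Q) (q₀ : Q) (x r : ℕ)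
    (hx : 1 ≤ x) (hr : r < k) :
    autoRun k ρ q₀ (k * x + r) = ρ (autoRun k ρ q₀ x) ⟨r, hr⟩ := by
  unfold autoRun
  have h : 0 < k * x + r := by positivity
  rw [Nat.digits_def' (by omega) h]
  have e1 : (k * x + r) % k = r := by
    rw [Nat.mul_add_mod]; exact Nat.mod_eq_of_lt hr
  have e2 : (k * x + r) / k = x := by
    rw [Nat.mul_add_div (by omega), Nat.div_eq_of_lt hr]; rfl
  rw [e1, e2]; simp [hr]

lemma autoRun_ext {Q : Type} (k : ℕ) (hk : 2 ≤ k) (ρ : Q → Fin k → Q) (q₀ : Q) (x x' : ℕ)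
    (hx : 1 ≤ x) (hx' : 1 ≤ x') (h : autoRun k ρ q₀ x = autoRun k ρ q₀ x') (m : ℕ) :
    ∀ v, v < k ^ m → autoRun k ρ q₀ (x * k ^ m + v) = autoRun k ρ q₀ (x' * k ^ m + v) := by
  induction m with
  | zero => intro v hv; have : v = 0 := by simpa using hv
            subst this; simpa using h
  | succ m ih =>
    intro v hv
    have hm : v % k < k := Nat.mod_lt _ (by omega)
    have hd : v / k < k ^ m := by
      apply Nat.div_lt_of_lt_mul; rw [← pow_succ']; exact hv
    have e : ∀ x, x * k ^ (m + 1) + v = k * (x * k ^ m + v / k) + v % k := by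
      intro x
      have := Nat.div_add_mod v k
      rw [pow_succ, mul_add, add_assoc, this]; ring
    have pos : ∀ x, 1 ≤ x → 1 ≤ x * k ^ m + v / k := by
      intro x hx
      have : 1 ≤ x * k ^ m := Nat.mul_pos hx (by positivity)
      exact this.trans (Nat.le_add_right _ _)
    rw [e, e, autoRun_step k hk _ _ _ _ (pos x hx) hm, autoRun_step k hk _ _ _ _ (pos x' hx') hm,
      ih _ hd]

/-- In an automatic sequence, a property holding robustly near multiples of powers of `p`
holds on a full cylinder inside any given cylinder. -/
lemma exists_cylinder {Δ : Type*} (k : ℕ) (hk : 2 ≤ k) (u : ℕ → Δ) (hu : IsAutomatic k u)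
    (S : Δ → Prop) (p : ℕ) (hp : 2 ≤ p)
    (H : ∀ D Z : ℕ, ∃ L : ℕ, ∀ d z : ℕ, 1 ≤ d → d ≤ D → z ≤ Z → S (u (d * p ^ L + z)))
    (w : ℕ) :
    ∃ m v : ℕ, v < k ^ m ∧ 1 ≤ w * k ^ m + v ∧
      ∀ y z : ℕ, z < k ^ y → S (u ((w * k ^ m + v) * k ^ y + z)) := by
  by_contra hcon
  push Not at hcon
  obtain ⟨Q, hQ, ρ, q₀, τ, hτ⟩ := hu
  have hst : ∀ s : Q, ∃ N : ℕ, ∀ m v, v < k ^ m → 1 ≤ w * k ^ m + v →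
      autoRun k ρ q₀ (w * k ^ m + v) = s →
      ∃ y z, y ≤ N ∧ z < k ^ y ∧ ¬ S (u ((w * k ^ m + v) * k ^ y + z)) := by
    intro s
    by_cases hs : ∃ m v, v < k ^ m ∧ 1 ≤ w * k ^ m + v ∧ autoRun k ρ q₀ (w * k ^ m + v) = s
    · obtain ⟨m, v, hv, h1, hr⟩ := hs
      obtain ⟨y, z, hz, hS⟩ := hcon m v hv h1
      refine ⟨y, fun m' v' hv' h1' hr' => ⟨y, z, le_rfl, hz, ?_⟩⟩
      rw [hτ, autoRun_ext k hk ρ q₀ _ _ h1' h1 (hr'.trans hr.symm) y z hz, ← hτ]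
      exact hS
    · refine ⟨0, fun m v hv h1 hr => absurd ⟨m, v, hv, h1, hr⟩ hs⟩
  choose N hN using hst
  have := Fintype.ofFinite Q
  set M := ∑ s, N s with hM
  have hNM : ∀ s, N s ≤ M := fun s => Finset.single_le_sum (fun _ _ => Nat.zero_le _) (Finset.mem_univ s)
  obtain ⟨L, hL⟩ := H ((w + 1) * k * k ^ M) (k ^ M)
  set P := p ^ L with hP
  have hPpos : 0 < P := by positivity
  set m := Nat.log k P + 1 with hm
  have hlt : P < k ^ m := Nat.lt_pow_succ_log_self (by omega) P
  have hle : k ^ m ≤ k * P := by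
    rw [hm, pow_succ']
    exact Nat.mul_le_mul_left _ (Nat.pow_log_le_self k (by omega))
  set d := w * k ^ m / P + 1 with hd
  have hdm := Nat.div_add_mod (w * k ^ m) P
  have hml := Nat.mod_lt (w * k ^ m) hPpos
  have hdP : d * P = P * (w * k ^ m / P) + P := by rw [hd]; ring
  have hgt : w * k ^ m < d * P := by omega
  have hup : d * P ≤ w * k ^ m + P := by omega
  obtain ⟨v, hv⟩ := Nat.exists_eq_add_of_lt hgt
  have hdD : d ≤ (w + 1) * k := by
    have : d * P ≤ ((w + 1) * k) * P := by nlinarith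
    exact Nat.le_of_mul_le_mul_right this hPpos
  have hvk : v + 1 < k ^ m := by omega
  obtain ⟨y, z, hy, hz, hS⟩ := hN _ m (v + 1) hvk (by omega) rfl
  apply hS
  have hyM : k ^ y ≤ k ^ M := Nat.pow_le_pow_right (by omega) (hy.trans (hNM _))
  have e : (w * k ^ m + (v + 1)) * k ^ y + z = (d * k ^ y) * P + z := by
    rw [← add_assoc, ← hv]; ring
  rw [e]
  refine hL _ _ (Nat.mul_pos (Nat.succ_pos _) (by positivity)) (Nat.mul_le_mul hdD hyM) (by omega)

lemma lnz_ne_zero (b n : ℕ) (hb : 2 ≤ b) (hn : n ≠ 0) : lnz b n ≠ 0 := by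
  unfold lnz
  intro h
  have h1 := Nat.dvd_of_mod_eq_zero h
  have hfin : FiniteMultiplicity b n := Nat.finiteMultiplicity_iff.mpr ⟨by omega, by omega⟩
  have hval : padicValNat b n = multiplicity b n := padicValNat_def' (by omega) hn
  rw [hval] at h1
  have h2 : b ^ multiplicity b n ∣ n := pow_multiplicity_dvd b n
  have h3 : b ^ (multiplicity b n + 1) ∣ n := by
    rw [pow_succ]
    exact Nat.mul_dvd_of_dvd_div h2 h1
  exact hfin.not_pow_dvd_of_multiplicity_lt (Nat.lt_succ_self _) h3

lemma pow_val_dvd (b n : ℕ) (hb : 2 ≤ b) (hn : n ≠ 0) : b ^ padicValNat b n ∣ n := by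
  rw [padicValNat_def' (by omega) hn]; exact pow_multiplicity_dvd b n

/-- If the base `q` digit sum of `n` is much larger than the base `p` digit sum,
then `p ^ α` divides the last nonzero digit. -/
lemma dvd_lnz (b p q α β t n : ℕ) (hb : 2 ≤ b) (hp : p.Prime) (hq : q.Prime)
    (hbt : b = p ^ α * t) (hpt : Nat.Coprime p t) (hqb : q ^ β ∣ b)
    (hc : α * (p - 1) ≤ β * (q - 1))
    (hs : digSum p n + β * (q - 1) ≤ digSum q n) :
    p ^ α ∣ lnz b n.factorial := by
  have hn0 : n.factorial ≠ 0 := n.factorial_ne_zero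
  set V := padicValNat b n.factorial with hV
  have hVd : b ^ V ∣ n.factorial := pow_val_dvd b _ hb hn0
  have := Fact.mk hp
  have := Fact.mk hq
  have lp : (p - 1) * padicValNat p n.factorial = n - digSum p n :=
    sub_one_mul_padicValNat_factorial n
  have lq : (q - 1) * padicValNat q n.factorial = n - digSum q n :=
    sub_one_mul_padicValNat_factorial n
  have sp := digSum_le p n
  have sq := digSum_le q n
  have hqV : β * V ≤ padicValNat q n.factorial := by
    apply (padicValNat_dvd_iff_le hn0).mp
    rw [pow_mul]
    exact (pow_dvd_pow_of_dvd hqb V).trans hVd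
  have h1 : (q - 1) * (β * V) ≤ n - digSum q n := lq ▸ Nat.mul_le_mul_left _ hqV
  have hp1 : 0 < p - 1 := by have := hp.two_le; omega
  have h2 : (p - 1) * (α * (V + 1)) ≤ (p - 1) * padicValNat p n.factorial := by
    rw [lp]
    calc (p - 1) * (α * (V + 1)) = α * (p - 1) * (V + 1) := by ring
      _ ≤ β * (q - 1) * (V + 1) := Nat.mul_le_mul_right _ hc
      _ = (q - 1) * (β * V) + β * (q - 1) := by ring
      _ ≤ n - digSum p n := by omega
  have h3 : α * (V + 1) ≤ padicValNat p n.factorial := Nat.le_of_mul_le_mul_left h2 hp1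
  have h4 : p ^ (α * (V + 1)) ∣ n.factorial := (padicValNat_dvd_iff_le hn0).mpr h3
  obtain ⟨M, hM⟩ := hVd
  have hbV : 0 < b ^ V := by positivity
  have hdiv : n.factorial / b ^ V = M := by rw [hM]; exact Nat.mul_div_cancel_left _ hbV
  have h5 : p ^ α ∣ M := by
    rw [hM, hbt, mul_pow, ← pow_mul, mul_add, pow_add, mul_assoc, mul_one] at h4
    have h6 := Nat.dvd_of_mul_dvd_mul_left (Nat.pow_pos hp.pos) h4
    exact (Nat.Coprime.pow α V hpt).dvd_of_dvd_mul_left h6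
  unfold lnz
  rw [← hV, hdiv]
  exact (Nat.dvd_mod_iff ⟨t, hbt⟩).mpr h5

end LnzAux

open LnzAux in
/-- Let `b` have prime factorization `∏ i, p i ^ a i` with `r ≥ 2` distinct
primes.  If two distinct indices `i ≠ j` attain the maximum of
`a m * (p m - 1)`, then the sequence of last nonzero digits of `n !` in base
`b` is not `k`-automatic for any `k ≥ 2`. -/
theorem lnz_factorial_not_automatic_of_tied_max (b r : ℕ) (hb : 2 ≤ b) (hr : 2 ≤ r)
    (p a : Fin r → ℕ) (hp : ∀ i, (p i).Prime) (hpinj : Function.Injective p)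
    (ha : ∀ i, 0 < a i) (hfac : b = ∏ i, p i ^ a i)
    (htie : ∃ i j : Fin r, i ≠ j ∧ a i * (p i - 1) = a j * (p j - 1) ∧
      ∀ m : Fin r, a m * (p m - 1) ≤ a i * (p i - 1)) :
    ∀ k : ℕ, 2 ≤ k → ¬ IsAutomatic k (fun n => lnz b (Nat.factorial n)) := by
  intro k hk haut
  obtain ⟨i₀, j₀, hij, heq, hmax⟩ := htie
  have hcopr : ∀ i j, i ≠ j → Nat.Coprime (p i) (p j) := fun i j h =>
    (Nat.coprime_primes (hp i) (hp j)).mpr (fun e => h (hpinj e))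
  have key : ∀ i : Fin r, ∀ D Z : ℕ, ∃ L : ℕ, ∀ d z : ℕ, 1 ≤ d → d ≤ D → z ≤ Z →
      p i ^ a i ∣ (fun n => lnz b (Nat.factorial n)) (d * p i ^ L + z) := by
    intro i D Z
    obtain ⟨j, hji, hcj⟩ : ∃ j, j ≠ i ∧ a i * (p i - 1) ≤ a j * (p j - 1) := by
      by_cases h : i = i₀
      · exact ⟨j₀, fun e => hij (h.symm.trans e.symm), heq ▸ hmax i⟩
      · exact ⟨i₀, fun e => h e.symm, hmax i⟩
    obtain ⟨L, hL, hs⟩ := exists_large_digSum (p i) (p j) (hp i).two_le (hp j).two_le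
      (hcopr i j hji.symm) D Z (D + Z + a j * (p j - 1))
    refine ⟨L, fun d z hd hdD hz => ?_⟩
    refine dvd_lnz b (p i) (p j) (a i) (a j) (∏ m ∈ Finset.univ.erase i, p m ^ a m) _ hb
      (hp i) (hp j) ?_ ?_ ?_ hcj ?_
    · rw [hfac]; exact (Finset.mul_prod_erase _ _ (Finset.mem_univ i)).symm
    · apply Nat.Coprime.prod_right
      intro m hm
      exact Nat.Coprime.pow_right _ (hcopr i m (Finset.ne_of_mem_erase hm).symm)
    · rw [hfac]; exact Finset.dvd_prod_of_mem (fun m => p m ^ a m) (Finset.mem_univ j)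
    · rw [digSum_split (p i) (hp i).two_le L d z (by omega)]
      have h1 := digSum_le (p i) d
      have h2 := digSum_le (p i) z
      have h3 := hs d z hd hdD hz
      omega
  have fin : ∀ s : Finset (Fin r), ∃ w : ℕ, ∀ i ∈ s, ∀ y z : ℕ, z < k ^ y →
      p i ^ a i ∣ lnz b (Nat.factorial (w * k ^ y + z)) := by
    intro s
    induction s using Finset.induction_on with
    | empty => exact ⟨0, by simp⟩
    | insert i s his ih =>
      obtain ⟨w, hw⟩ := ih
      obtain ⟨m, v, hv, -, hext⟩ := exists_cylinder k hk _ haut (fun x => p i ^ a i ∣ x) (p i)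
        (hp i).two_le (key i) w
      refine ⟨w * k ^ m + v, fun j hj y z hz => ?_⟩
      rcases Finset.mem_insert.mp hj with rfl | hj
      · exact hext y z hz
      · have e : (w * k ^ m + v) * k ^ y + z = w * k ^ (m + y) + (v * k ^ y + z) := by
          rw [pow_add]; ring
        rw [e]
        apply hw j hj
        rw [pow_add]
        calc v * k ^ y + z < v * k ^ y + k ^ y := by omega
          _ = (v + 1) * k ^ y := by ring
          _ ≤ k ^ m * k ^ y := Nat.mul_le_mul_right _ hv
  obtain ⟨w, hw⟩ := fin Finset.univ
  have hbd : b ∣ lnz b (Nat.factorial w) := by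
    conv_lhs => rw [hfac]
    apply Finset.prod_dvd_of_isRelPrime
    · intro i _ j _ hne
      exact Nat.coprime_iff_isRelPrime.mp (Nat.Coprime.pow _ _ (hcopr i j hne))
    · intro i _
      simpa using hw i (Finset.mem_univ i) 0 0 (by simp)
  have hlt : lnz b (Nat.factorial w) < b := Nat.mod_lt _ (by omega)
  exact lnz_ne_zero b _ hb (Nat.factorial_ne_zero w) (Nat.eq_zero_of_dvd_of_lt hbd hlt)
end

section
/- Let P be a finite set of prime numbers with at least two elements, let p be the largest element of P, and let c > 0 be a real number. Define A₋ = {n ∈ ℤ₊ : max_{q∈P} s_q(n) = s_p(n)} and A₊ = {n ∈ ℤ₊ : max_{q∈P} s_q(n) − s_p(n) ≥ c}. Then for every integer k ≥ 2 there is no finite set Q of states, transition function ρ : Q × {0,…,k−1} → Q, initial state q₀ ∈ Q, finite output alphabet Δ, output function τ : Q → Δ, and two distinct values δ₋, δ₊ ∈ Δ, such that running the automaton on the base-k digits of n (most significant digit first) outputs δ₋ for every n ∈ A₋ and δ₊ for every n ∈ A₊. -/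
lemma aux_digSum_cons (b x d : ℕ) (hb : 2 ≤ b) (hd : d < b) :
    digSum b (b * x + d) = digSum b x + d := by
  unfold digSum
  rcases Nat.eq_zero_or_pos (b * x + d) with h | h
  · have hd0 : d = 0 := by omega
    have hx : x = 0 := by
      have : b * x = 0 := by omega
      rcases Nat.mul_eq_zero.mp this with h | h <;> omega
    subst hd0; subst hx; simp
  · rw [Nat.digits_def' (by omega) h, List.sum_cons]
    have h1 : (b * x + d) % b = d := by
      rw [Nat.mul_add_mod, Nat.mod_eq_of_lt hd]
    have h2 : (b * x + d) / b = x := by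
      rw [Nat.mul_add_div (by omega), Nat.div_eq_of_lt hd, Nat.add_zero]
    rw [h1, h2, Nat.add_comm]

lemma aux_digSum_zero (b : ℕ) : digSum b 0 = 0 := by simp [digSum]

lemma aux_digSum_append (b : ℕ) (hb : 2 ≤ b) (L : ℕ) : ∀ x w : ℕ, w < b ^ L →
    digSum b (x * b ^ L + w) = digSum b x + digSum b w := by
  induction L with
  | zero => intro x w hw; have : w = 0 := by simpa using hw
            subst this; simp [aux_digSum_zero]
  | succ L ih =>
    intro x w hw
    have hw' : w / b < b ^ L := by
      rw [Nat.div_lt_iff_lt_mul (by omega)]; rwa [pow_succ] at hw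
    have hm : w % b < b := Nat.mod_lt _ (by omega)
    have e1 : x * b ^ (L + 1) + w = b * (x * b ^ L + w / b) + w % b := by
      conv_lhs => rw [← Nat.div_add_mod w b]
      ring
    have e2 : digSum b w = digSum b (w / b) + w % b := by
      conv_lhs => rw [← Nat.div_add_mod w b]
      exact aux_digSum_cons b _ _ hb hm
    rw [e1, aux_digSum_cons b _ _ hb hm, ih _ _ hw', e2]; ring

lemma aux_digSum_mul_pow (b : ℕ) (hb : 2 ≤ b) (L x : ℕ) :
    digSum b (x * b ^ L) = digSum b x := by
  have := aux_digSum_append b hb L x 0 (by positivity)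
  simpa [aux_digSum_zero] using this

lemma aux_digSum_pos (b : ℕ) (n : ℕ) (hn : 0 < n) : 1 ≤ digSum b n := by
  by_contra h
  have h0 : (Nat.digits b n).sum = 0 := by unfold digSum at h; omega
  have hall := List.sum_eq_zero_iff.mp h0
  have hne : Nat.digits b n ≠ [] := Nat.digits_ne_nil_iff_ne_zero.mpr hn.ne'
  exact Nat.getLast_digit_ne_zero b hn.ne' (hall _ (List.getLast_mem hne))

lemma aux_digSum_pred_pow (b : ℕ) (hb : 2 ≤ b) (N : ℕ) :
    digSum b (b ^ N - 1) = (b - 1) * N := by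
  induction N with
  | zero => simp [aux_digSum_zero]
  | succ N ih =>
    have hp : 0 < b ^ N := by positivity
    have e : b ^ (N + 1) - 1 = b * (b ^ N - 1) + (b - 1) := by
      have : b * (b ^ N - 1) + b = b ^ (N + 1) := by
        rw [pow_succ, Nat.mul_comm (b ^ N) b]
        conv_rhs => rw [← Nat.sub_add_cancel hp]
        ring
      omega
    rw [e, aux_digSum_cons b _ _ hb (by omega), ih]; ring

lemma aux_digSum_unbounded (q g a : ℕ) (hq : 2 ≤ q) (hg : 2 ≤ g) (hc : Nat.Coprime g q)
    (ha : 0 < a) (B : ℕ) : ∃ j, B ≤ digSum q (a * g ^ j) := by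
  induction B with
  | zero => exact ⟨0, Nat.zero_le _⟩
  | succ B ih =>
    obtain ⟨j, hj⟩ := ih
    set n := a * g ^ j with hn
    have hnpos : 0 < n := by positivity
    have hns : n < q ^ n := Nat.lt_pow_self (by omega)
    have ht : g ^ Nat.totient (q ^ n) ≡ 1 [MOD q ^ n] :=
      Nat.ModEq.pow_totient (hc.pow_right n)
    have htpos : 0 < Nat.totient (q ^ n) := Nat.totient_pos.mpr (by positivity)
    have hgt : 1 < g ^ Nat.totient (q ^ n) := Nat.one_lt_pow htpos.ne' (by omega)
    obtain ⟨h, hh⟩ := (Nat.modEq_iff_dvd' hgt.le).mp ht.symm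
    have hgeq : g ^ Nat.totient (q ^ n) = q ^ n * h + 1 := by omega
    have hpos : 0 < h := by
      rcases Nat.eq_zero_or_pos h with h0 | h0
      · subst h0; simp at hgeq; omega
      · exact h0
    refine ⟨j + Nat.totient (q ^ n), ?_⟩
    have e : a * g ^ (j + Nat.totient (q ^ n)) = (h * n) * q ^ n + n := by
      rw [pow_add, ← mul_assoc, ← hn, hgeq]; ring
    rw [e, aux_digSum_append q hq n _ _ hns]
    have := aux_digSum_pos q (h * n) (by positivity)
    omega

lemma aux_pow_lt (q p : ℕ) (hq : 2 ≤ q) (hqp : q < p) : p ^ (q - 1) < q ^ (p - 1) := by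
  have hp1 : (0 : ℝ) < (p : ℝ) - 1 := by
    have : (2 : ℝ) < p := by exact_mod_cast (by omega : 2 < p)
    linarith
  have hq1 : (0 : ℝ) < (q : ℝ) - 1 := by
    have : (2 : ℝ) ≤ q := by exact_mod_cast hq
    linarith
  have hlt : (q : ℝ) - 1 < (p : ℝ) - 1 := by
    have : (q : ℝ) < p := by exact_mod_cast hqp
    linarith
  have h := rpow_one_add_lt_one_add_mul_self (s := (p : ℝ) - 1)
    (p := ((q : ℝ) - 1) / ((p : ℝ) - 1)) (by linarith) hp1.ne' (by positivity)
    ((div_lt_one hp1).mpr hlt)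
  rw [div_mul_cancel₀ _ hp1.ne'] at h
  have h2 : (p : ℝ) ^ (((q : ℝ) - 1) / ((p : ℝ) - 1)) < q := by
    have e1 : 1 + ((p : ℝ) - 1) = p := by ring
    have e2 : 1 + ((q : ℝ) - 1) = q := by ring
    rwa [e1, e2] at h
  have h3 := pow_lt_pow_left₀ h2 (by positivity) (n := p - 1) (by omega)
  rw [← Real.rpow_natCast, ← Real.rpow_mul (by positivity), Nat.cast_sub (by omega : 1 ≤ p),
    Nat.cast_one, div_mul_cancel₀ _ hp1.ne'] at h3
  have e3 : (q : ℝ) - 1 = ((q - 1 : ℕ) : ℝ) := by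
    rw [Nat.cast_sub (by omega : 1 ≤ q), Nat.cast_one]
  rw [e3, Real.rpow_natCast] at h3
  exact_mod_cast h3

lemma aux_digSum_le (q n : ℕ) (hq : 2 ≤ q) :
    digSum q n ≤ (q - 1) * (Nat.digits q n).length := by
  unfold digSum
  have := List.sum_le_card_nsmul (Nat.digits q n) (q - 1) (fun x hx => by
    have := Nat.digits_lt_base (by omega : 1 < q) hx
    omega)
  simpa [Nat.mul_comm] using this

lemma aux_one (q p C : ℕ) (hq : 2 ≤ q) (hqp : q < p) : ∃ N0, ∀ N, N0 ≤ N →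
    ∀ n, 0 < n → n ≤ C * p ^ N → digSum q n ≤ (p - 1) * N := by
  have hXY := aux_pow_lt q p hq hqp
  set X := p ^ (q - 1) with hX
  set Y := q ^ (p - 1) with hY
  have hXpos : 0 < X := by have : 0 < p := by omega
                           positivity
  have hr : (1 : ℝ) < (Y : ℝ) / X := by
    rw [one_lt_div (by exact_mod_cast hXpos)]; exact_mod_cast hXY
  obtain ⟨N0, hN0⟩ := pow_unbounded_of_one_lt ((C ^ (p - 1) * Y : ℕ) : ℝ) hr
  refine ⟨N0, fun N hN n hn hle => ?_⟩
  by_contra hcon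
  push Not at hcon
  have hs := aux_digSum_le q n hq
  set l := (Nat.digits q n).length with hl
  have hlt : (p - 1) * N < (q - 1) * l := lt_of_lt_of_le hcon hs
  have hNl : N ≤ l := by
    by_contra hh
    push Not at hh
    have : (q - 1) * l ≤ (p - 1) * N := Nat.mul_le_mul (by omega) hh.le
    omega
  have hpow : q ^ l ≤ q * n := Nat.base_pow_length_digits_le q n (by omega) hn.ne'
  have h1 : Y ^ l ≤ C ^ (p - 1) * Y * X ^ l := by
    calc Y ^ l = (q ^ l) ^ (p - 1) := by rw [hY, ← pow_mul, ← pow_mul, mul_comm]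
      _ ≤ (q * (C * p ^ N)) ^ (p - 1) := by
          gcongr; exact hpow.trans (by gcongr)
      _ = C ^ (p - 1) * Y * p ^ ((p - 1) * N) := by
          rw [hY, mul_pow, mul_pow, ← pow_mul, mul_comm N]; ring
      _ ≤ C ^ (p - 1) * Y * p ^ ((q - 1) * l) := by
          gcongr; omega
      _ = _ := by rw [hX, ← pow_mul]
  have h2 : ((Y : ℝ) / X) ^ N0 ≤ ((Y : ℝ) / X) ^ l :=
    pow_le_pow_right₀ hr.le (hN.trans hNl)
  have h3 : ((Y : ℝ) / X) ^ l ≤ ((C ^ (p - 1) * Y : ℕ) : ℝ) := by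
    have : (0 : ℝ) < (X : ℝ) ^ l := by
      have : (0 : ℝ) < X := by exact_mod_cast hXpos
      positivity
    rw [div_pow, div_le_iff₀ this]
    exact_mod_cast h1
  linarith

lemma aux_minus (P : Finset ℕ) (hprime : ∀ q ∈ P, Nat.Prime q)
    (p : ℕ) (hpP : p ∈ P) (hpmax : ∀ q ∈ P, q ≤ p) (C : ℕ) : ∃ N0, ∀ N, N0 ≤ N →
    ∀ n, 0 < n → n ≤ C * p ^ N → (p - 1) * N ≤ digSum p n →
      P.sup (fun q => digSum q n) = digSum p n := by
  have h1 : ∀ q : ℕ, ∃ N0, q ∈ P → q ≠ p → ∀ N, N0 ≤ N →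
      ∀ n, 0 < n → n ≤ C * p ^ N → digSum q n ≤ (p - 1) * N := by
    intro q
    by_cases h : q ∈ P ∧ q ≠ p
    · obtain ⟨N0, hN⟩ := aux_one q p C (hprime q h.1).two_le
        (lt_of_le_of_ne (hpmax q h.1) h.2)
      exact ⟨N0, fun _ _ => hN⟩
    · exact ⟨0, fun a b => absurd ⟨a, b⟩ h⟩
  choose f hf using h1
  refine ⟨P.sup f, fun N hN n hn hle hd => ?_⟩
  apply le_antisymm
  · apply Finset.sup_le
    intro q hq
    by_cases hqp : q = p
    · rw [hqp]
    · exact (hf q hq hqp N ((Finset.le_sup hq).trans hN) n hn hle).trans hd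
  · exact Finset.le_sup (f := fun q => digSum q n) hpP

/-- One step of the automaton. -/
def auxStep {Q : Type} (k : ℕ) (ρ : Q → Fin k → Q) (q : Q) (d : ℕ) : Q :=
  if h : d < k then ρ q ⟨d, h⟩ else q

/-- The action of a block of `L` digits. -/
def auxBlock {Q : Type} (k : ℕ) (ρ : Q → Fin k → Q) : ℕ → ℕ → Q → Q
  | 0, _, s => s
  | L + 1, w, s => auxStep k ρ (auxBlock k ρ L (w / k) s) (w % k)

lemma aux_autoRun_cons {Q : Type} (k : ℕ) (hk : 2 ≤ k) (ρ : Q → Fin k → Q) (q₀ : Q)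
    (x d : ℕ) (hx : 0 < x) (hd : d < k) :
    autoRun k ρ q₀ (k * x + d) = auxStep k ρ (autoRun k ρ q₀ x) d := by
  have h1 : (k * x + d) % k = d := by
    rw [Nat.mul_add_mod, Nat.mod_eq_of_lt hd]
  have h2 : (k * x + d) / k = x := by
    rw [Nat.mul_add_div (by omega), Nat.div_eq_of_lt hd, Nat.add_zero]
  have hpos : 0 < k * x + d := by positivity
  unfold autoRun
  rw [Nat.digits_def' (by omega) hpos, h1, h2, List.reverse_cons, List.foldl_append]
  rfl

lemma aux_autoRun_block {Q : Type} (k : ℕ) (hk : 2 ≤ k) (ρ : Q → Fin k → Q) (q₀ : Q)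
    (x : ℕ) (hx : 0 < x) (L : ℕ) : ∀ w, w < k ^ L →
    autoRun k ρ q₀ (x * k ^ L + w) = auxBlock k ρ L w (autoRun k ρ q₀ x) := by
  induction L with
  | zero => intro w hw; have : w = 0 := by simpa using hw
            subst this; simp [auxBlock]
  | succ L ih =>
    intro w hw
    have hw' : w / k < k ^ L := by
      rw [Nat.div_lt_iff_lt_mul (by omega)]; rwa [pow_succ] at hw
    have hm : w % k < k := Nat.mod_lt _ (by omega)
    have e1 : x * k ^ (L + 1) + w = k * (x * k ^ L + w / k) + w % k := by
      conv_lhs => rw [← Nat.div_add_mod w k]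
      ring
    rw [e1, aux_autoRun_cons k hk ρ q₀ _ _ (by positivity) hm, ih _ hw', auxBlock]

lemma aux_autoRun_zeros {Q : Type} (k : ℕ) (hk : 2 ≤ k) (ρ : Q → Fin k → Q) (q₀ : Q)
    (x : ℕ) (hx : 0 < x) (L : ℕ) :
    autoRun k ρ q₀ (x * k ^ L) = (fun s => auxStep k ρ s 0)^[L] (autoRun k ρ q₀ x) := by
  induction L with
  | zero => simp
  | succ L ih =>
    have e : x * k ^ (L + 1) = k * (x * k ^ L) + 0 := by ring
    rw [e, aux_autoRun_cons k hk ρ q₀ _ _ (by positivity) (by omega), ih,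
      Function.iterate_succ_apply']

/-- The core: two numbers, one in each set, reaching the same state. -/
lemma aux_core (P : Finset ℕ)
    (hprime : ∀ q ∈ P, Nat.Prime q)
    (p : ℕ) (hpP : p ∈ P) (hpmax : ∀ q ∈ P, q ≤ p) (q : ℕ) (hqP : q ∈ P) (hqp : q ≠ p)
    (c k : ℕ) (hk : 2 ≤ k) (Q : Type) [Finite Q] (ρ : Q → Fin k → Q) (q₀ : Q) :
    ∃ n n' : ℕ, 0 < n ∧ 0 < n' ∧ P.sup (fun q => digSum q n) = digSum p n ∧
      digSum p n' + c ≤ digSum q n' ∧ autoRun k ρ q₀ n = autoRun k ρ q₀ n' := by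
  have hp := hprime p hpP
  have hq := hprime q hqP
  have hp2 := hp.two_le
  have hcop : Nat.Coprime p q := (Nat.coprime_primes hp hq).mpr (Ne.symm hqp)
  obtain ⟨e, k', hk', hkeq⟩ := Nat.exists_eq_pow_mul_and_not_dvd (n := k) (by omega) p hp.ne_one
  have hk'0 : k' ≠ 0 := by rintro rfl; simp at hk'
  by_cases hk1 : k' = 1
  · subst hk1
    rw [mul_one] at hkeq
    have he : e ≠ 0 := by rintro rfl; simp at hkeq; omega
    set f : Q → Q := fun s => auxStep k ρ s 0 with hf
    obtain ⟨i, i', hii, hfe⟩ := Finite.exists_ne_map_eq_of_infinite (fun i : ℕ => f^[i])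
    wlog hlt : i < i' generalizing i i'
    · exact this i' i hii.symm hfe.symm (by omega)
    obtain ⟨T, rfl⟩ : ∃ T, i' = i + T := ⟨i' - i, by omega⟩
    have hT : 0 < T := by omega
    have hper : ∀ j, f^[i + T * j] = f^[i] := by
      intro j
      induction j with
      | zero => simp
      | succ j ih =>
        have : i + T * (j + 1) = (i + T) + T * j := by ring
        rw [this, Function.iterate_add, ← hfe, ← Function.iterate_add, ih]
    obtain ⟨N0, hN0⟩ := aux_minus P hprime p hpP hpmax (k ^ i)
    set N := N0 + 1 with hN
    have hpN : 1 < p ^ N := Nat.one_lt_pow (by omega) (by omega)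
    set u := p ^ N - 1 with hu
    have hupos : 0 < u := by omega
    have hds : ∀ L, digSum p (u * k ^ L) = (p - 1) * N := by
      intro L
      rw [hkeq, ← pow_mul, aux_digSum_mul_pow p hp2, hu, aux_digSum_pred_pow p hp2]
    obtain ⟨j, hj⟩ := aux_digSum_unbounded q (k ^ T) (u * k ^ i) hq.two_le
      (hk.trans (Nat.le_self_pow hT.ne' k))
      (by rw [hkeq]; exact (hcop.pow_left e).pow_left T) (by positivity) ((p - 1) * N + c)
    have e1 : u * k ^ i * (k ^ T) ^ j = u * k ^ (i + T * j) := by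
      rw [← pow_mul, mul_assoc, ← pow_add]
    rw [e1] at hj
    refine ⟨u * k ^ i, u * k ^ (i + T * j), by positivity, by positivity, ?_, ?_, ?_⟩
    · refine hN0 N (by omega) _ (by positivity) ?_ (hds i).ge
      rw [mul_comm]
      exact Nat.mul_le_mul_left _ (Nat.sub_le _ _)
    · rw [hds]; exact hj
    · rw [aux_autoRun_zeros k hk ρ q₀ u hupos, aux_autoRun_zeros k hk ρ q₀ u hupos]
      exact (congrFun (hper j) _).symm
  · have hk2 : 2 ≤ k' := by omega
    have hcop' : Nat.Coprime p k' := (Nat.Prime.coprime_iff_not_dvd hp).mpr hk'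
    obtain ⟨L, a1, a2, hlt, ha2, hF⟩ : ∃ L a1 a2, a1 < a2 ∧ a2 < k' ^ L ∧
        auxBlock k ρ L (a1 * p ^ (e * L)) = auxBlock k ρ L (a2 * p ^ (e * L)) := by
      have := Fintype.ofFinite (Q → Q)
      set L := Fintype.card (Q → Q) with hL
      have hc : Fintype.card (Q → Q) < Fintype.card (Fin (k' ^ L)) := by
        rw [Fintype.card_fin]; exact Nat.lt_pow_self (by omega)
      obtain ⟨a, b, hab, he⟩ := Fintype.exists_ne_map_eq_of_card_lt
        (fun a : Fin (k' ^ L) => auxBlock k ρ L (a.1 * p ^ (e * L))) hc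
      have hne : a.1 ≠ b.1 := fun h => hab (Fin.ext h)
      rcases lt_or_gt_of_ne hne with h | h
      · exact ⟨L, a, b, h, b.2, he⟩
      · exact ⟨L, b, a, h, a.2, he.symm⟩
    have hppos : 0 < p := by omega
    have hkL : k ^ L = p ^ (e * L) * k' ^ L := by rw [hkeq, mul_pow, ← pow_mul]
    set D := a2 - a1 with hD
    set r := D with hr
    have hDr : D < p ^ r := Nat.lt_pow_self (by omega)
    obtain ⟨N0, hN0⟩ := aux_minus P hprime p hpP hpmax (a2 * p ^ (e * L + r))
    set t := Nat.totient (k' ^ L) with ht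
    have htpos : 0 < t := Nat.totient_pos.mpr (by positivity)
    set J := N0 + r + 1 with hJ
    obtain ⟨j, hj⟩ := aux_digSum_unbounded q (p ^ t) (a2 * p ^ (e * L) * (p ^ t) ^ J) hq.two_le
      (hp2.trans (Nat.le_self_pow htpos.ne' p)) (hcop.pow_left t)
      (by have : 0 < a2 := by omega
          positivity) (digSum p a2 + c)
    set M := t * (J + j) with hM
    have hMge : N0 + r + 1 ≤ M := by
      calc N0 + r + 1 ≤ 1 * (J + j) := by omega
        _ ≤ M := Nat.mul_le_mul_right _ htpos
    have e1 : a2 * p ^ (e * L) * (p ^ t) ^ J * (p ^ t) ^ j = a2 * p ^ (e * L) * p ^ M := by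
      rw [mul_assoc _ ((p ^ t) ^ J), ← pow_add, ← pow_mul]
    rw [e1] at hj
    have hmod : p ^ M ≡ 1 [MOD k' ^ L] := by
      have := (Nat.ModEq.pow_totient (hcop'.pow_right L)).pow (J + j)
      rwa [one_pow, ← pow_mul] at this
    have hgt : 1 < p ^ M := Nat.one_lt_pow (by omega) (by omega)
    obtain ⟨y, hy⟩ := (Nat.modEq_iff_dvd' hgt.le).mp hmod.symm
    have hyeq : p ^ M = k' ^ L * y + 1 := by omega
    have hypos : 0 < y := by
      rcases Nat.eq_zero_or_pos y with h0 | h0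
      · subst h0; simp at hyeq; omega
      · exact h0
    have ha2pos : 0 < a2 := by omega
    have hpe : 0 < p ^ (e * L) := by positivity
    have en' : a2 * p ^ (e * L) * p ^ M = (a2 * y) * k ^ L + a2 * p ^ (e * L) := by
      rw [hyeq, hkL]; ring
    set N := M - r with hNdef
    have hMN : M = N + r := by omega
    have en : (a2 * y) * k ^ L + a1 * p ^ (e * L) =
        ((((a2 - 1) * p ^ N + (p ^ N - 1)) * p ^ r) + (p ^ r - D)) * p ^ (e * L) := by
      have h1 : (a2 * y) * k ^ L + a1 * p ^ (e * L) + D * p ^ (e * L)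
          = a2 * p ^ (e * L) * p ^ M := by
        rw [en', add_assoc, ← add_mul]; congr 2; omega
      have h2 : ((((a2 - 1) * p ^ N + (p ^ N - 1)) * p ^ r) + (p ^ r - D)) * p ^ (e * L)
          + D * p ^ (e * L) = a2 * p ^ (e * L) * p ^ M := by
        rw [← add_mul, add_assoc, Nat.sub_add_cancel hDr.le, hMN, pow_add]
        have h3 : (a2 - 1) * p ^ N + (p ^ N - 1) + 1 = a2 * p ^ N := by
          rw [add_assoc, Nat.sub_add_cancel (Nat.one_le_pow _ _ hppos)]
          obtain ⟨z, rfl⟩ : ∃ z, a2 = z + 1 := ⟨a2 - 1, by omega⟩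
          simp; ring
        calc _ = ((a2 - 1) * p ^ N + (p ^ N - 1) + 1) * p ^ r * p ^ (e * L) := by ring
          _ = _ := by rw [h3]; ring
      omega
    refine ⟨(a2 * y) * k ^ L + a1 * p ^ (e * L), a2 * p ^ (e * L) * p ^ M,
      by positivity, by positivity, ?_, ?_, ?_⟩
    · refine hN0 N (by omega) _ (by positivity) ?_ ?_
      · calc _ ≤ (a2 * y) * k ^ L + a2 * p ^ (e * L) := by gcongr
          _ = a2 * p ^ (e * L) * p ^ M := en'.symm
          _ = _ := by rw [hMN]; ring
          _ ≤ _ := le_refl _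
      · rw [en, aux_digSum_mul_pow p hp2, aux_digSum_append p hp2 r _ _ (by omega),
          aux_digSum_append p hp2 N _ _ (Nat.sub_lt (by positivity) one_pos),
          aux_digSum_pred_pow p hp2]
        omega
    · rw [aux_digSum_mul_pow p hp2, aux_digSum_mul_pow p hp2] 
      exact hj
    · have hlt2 : a2 * p ^ (e * L) < k ^ L := by
        rw [hkL, mul_comm]; gcongr
      have hlt1 : a1 * p ^ (e * L) < k ^ L := lt_of_le_of_lt (by gcongr) hlt2
      rw [en', aux_autoRun_block k hk ρ q₀ _ (by positivity) L _ hlt1,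
        aux_autoRun_block k hk ρ q₀ _ (by positivity) L _ hlt2, hF]

/-- Let `P` be a finite set of primes with at least two elements, `p` its
largest element, and `c > 0` a real number.  No finite automaton with output
can assign one fixed output value to all `n` with `max_{q ∈ P} s_q n = s_p n`
and a different fixed output value to all `n` with
`max_{q ∈ P} s_q n - s_p n ≥ c`. -/
theorem no_automaton_separates_digit_sum_sets (P : Finset ℕ)
    (hprime : ∀ q ∈ P, Nat.Prime q) (hcard : 2 ≤ P.card)
    (p : ℕ) (hpP : p ∈ P) (hpmax : ∀ q ∈ P, q ≤ p)
    (c : ℝ) (hc : 0 < c) (k : ℕ) (hk : 2 ≤ k) :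
    ¬ ∃ (Q : Type) (_ : Finite Q) (ρ : Q → Fin k → Q) (q₀ : Q)
        (Δ : Type) (_ : Finite Δ) (τ : Q → Δ) (δminus δplus : Δ),
      δminus ≠ δplus ∧
      (∀ n : ℕ, 0 < n → P.sup (fun q => digSum q n) = digSum p n →
        τ (autoRun k ρ q₀ n) = δminus) ∧
      (∀ n : ℕ, 0 < n →
        c ≤ ((P.sup (fun q => digSum q n) : ℕ) : ℝ) - (digSum p n : ℝ) →
        τ (autoRun k ρ q₀ n) = δplus) := by
  rintro ⟨Q, hQ, ρ, q₀, Δ, hΔ, τ, δminus, δplus, hne, hm, hpl⟩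
  obtain ⟨q, hqP, hqp⟩ := Finset.exists_mem_ne (by omega : 1 < P.card) p
  obtain ⟨n, n', hn, hn', h1, h2, h3⟩ :=
    aux_core P hprime p hpP hpmax q hqP hqp ⌈c⌉₊ k hk Q ρ q₀
  apply hne
  rw [← hm n hn h1, h3]
  apply hpl n' hn'
  have h4 : digSum q n' ≤ P.sup (fun q => digSum q n') :=
    Finset.le_sup (f := fun q => digSum q n') hqP
  have h5 : ((digSum p n' + ⌈c⌉₊ : ℕ) : ℝ) ≤ ((P.sup (fun q => digSum q n') : ℕ) : ℝ) := by
    exact_mod_cast h2.trans h4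
  have h6 := Nat.le_ceil c
  push_cast at h5 ⊢
  linarith
end
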